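/- Let X, V_η, V_φ, V_z be a characteristic curve of the Taylor–Couette transport field on an interval I, and suppose X(t) = η, V_η(t) = v_η, V_φ(t) = v_φ at some t ∈ I. Then for every s ∈ I the radial velocity satisfies the energy identity V_η(s)² = v_η² + ∫_{X(s)}^{η} (2/(1−y)) · [ (1−η)/(1−y)·v_φ + (α/(2η₁))·(1−y) − (α/(2η₁))·(1−η)²/(1−y) ]² dy. -/

import Mathlib

open Set MeasureTheory

/-!
Let `r = 1 - X` be the radius and `2 * κ = α / η₁`. The azimuthal equation says that `r * Vφ` and
`κ * r ^ 2` have the same derivative, so their difference is conserved and `Vφ` is a function of `X`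
alone. The equation for `Vη` thus becomes one-dimensional Newtonian motion under a force depending
only on `X`, and the identity is its work-energy theorem.
-/

theorem eq_of_hasDerivWithinAt_zero {𝕜 E : Type*} [RCLike 𝕜] [NormedAddCommGroup E]
    [NormedSpace 𝕜 E] {s : Set 𝕜} (hs : Convex ℝ s) {f : 𝕜 → E}
    (hf : ∀ x ∈ s, HasDerivWithinAt f 0 s x) {x y : 𝕜} (hx : x ∈ s) (hy : y ∈ s) :
    f x = f y := by
  have h : ‖f x - f y‖ ≤ 0 * ‖x - y‖ :=
    hs.norm_image_sub_le_of_norm_hasDerivWithin_le hf (fun _ _ => norm_zero.le) hy hx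
  rwa [zero_mul, norm_le_zero_iff, sub_eq_zero] at h

theorem sq_eq_sq_add_two_mul_integral_of_hasDerivWithinAt {a b : ℝ} {x v F : ℝ → ℝ}
    (hx : ∀ s ∈ uIcc a b, HasDerivWithinAt x (v s) (uIcc a b) s)
    (hv : ∀ s ∈ uIcc a b, HasDerivWithinAt v (F (x s)) (uIcc a b) s)
    (hF : ContinuousOn F (x '' uIcc a b)) :
    v b ^ 2 = v a ^ 2 + 2 * ∫ y in x a..x b, F y := by
  have hxc : ContinuousOn x (uIcc a b) := fun s hs => (hx s hs).continuousWithinAt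
  have hvc : ContinuousOn v (uIcc a b) := fun s hs => (hv s hs).continuousWithinAt
  have hFx : ContinuousOn (fun s => F (x s)) (uIcc a b) := hF.comp hxc (mapsTo_image x _)
  have right_deriv {f f' : ℝ → ℝ} (hf : ∀ s ∈ uIcc a b, HasDerivWithinAt f (f' s) (uIcc a b) s) :
      ∀ s ∈ Ioo (min a b) (max a b), HasDerivWithinAt f (f' s) (Ioi s) s := fun s hs =>
    ((hf s (Ioo_subset_Icc_self hs)).hasDerivAt (Icc_mem_nhds hs.1 hs.2)).hasDerivWithinAt
  have work : ∫ y in x a..x b, F y = (v b ^ 2 - v a ^ 2) / 2 :=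
    calc ∫ y in x a..x b, F y = ∫ s in a..b, F (x s) * v s :=
          (intervalIntegral.integral_comp_mul_deriv'' hxc (right_deriv hx) hvc hF).symm
      _ = ∫ s in a..b, v s * F (x s) := by simp only [mul_comm]
      _ = ∫ u in v a..v b, u :=
          intervalIntegral.integral_comp_mul_deriv'' hvc (right_deriv hv) hFx continuousOn_id
      _ = (v b ^ 2 - v a ^ 2) / 2 := integral_id
  linarith

/-- The first integral of the azimuthal equation: angular momentum at radius `1 - x` with azimuthal
velocity `v`, corrected by the drift `κ * (1 - x) ^ 2`. -/
def angularInvariant (κ x v : ℝ) : ℝ :=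
  (1 - x) * v - κ * (1 - x) ^ 2

/-- The azimuthal velocity at radius `1 - y` prescribed by conservation of `angularInvariant` when
it is `v` at radius `1 - x`; meaningful for `y ≠ 1`. -/
noncomputable def azimuthalVelocity (κ x v y : ℝ) : ℝ :=
  (1 - x) / (1 - y) * v + κ * (1 - y) - κ * (1 - x) ^ 2 / (1 - y)

theorem eq_azimuthalVelocity_of_angularInvariant_eq {κ x v y w : ℝ} (hy : y ≠ 1)
    (h : angularInvariant κ y w = angularInvariant κ x v) :
    w = azimuthalVelocity κ x v y := by
  have hy' : 1 - y ≠ 0 := sub_ne_zero.mpr hy.symm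
  unfold angularInvariant at h
  unfold azimuthalVelocity
  field_simp
  linarith

theorem continuousOn_azimuthalVelocity (κ x v : ℝ) :
    ContinuousOn (azimuthalVelocity κ x v) {1}ᶜ := by
  have hne : ∀ y ∈ ({1}ᶜ : Set ℝ), 1 - y ≠ 0 := fun y hy => sub_ne_zero.mpr (Ne.symm hy)
  unfold azimuthalVelocity
  fun_prop (disch := assumption)

theorem hasDerivWithinAt_angularInvariant {κ vη s : ℝ} {X Vφ : ℝ → ℝ} {I : Set ℝ}
    (hXs : X s ≠ 1) (hX : HasDerivWithinAt X vη I s)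
    (hVφ : HasDerivWithinAt Vφ (vη * Vφ s / (1 - X s) - 2 * κ * vη) I s) :
    HasDerivWithinAt (fun r => angularInvariant κ (X r) (Vφ r)) 0 I s := by
  have hr : 1 - X s ≠ 0 := sub_ne_zero.mpr hXs.symm
  have radius := hX.const_sub 1
  refine ((radius.mul hVφ).sub ((radius.pow 2).const_mul κ)).congr_deriv ?_
  simp only [Nat.cast_ofNat, Nat.add_one_sub_one, pow_one]
  field_simp
  ring

theorem radial_velocity_energy_identity_general {κ : ℝ} {I : Set ℝ} (hI : I.OrdConnected)
    {X Vη Vφ : ℝ → ℝ} (hX1 : ∀ s ∈ I, X s ≠ 1)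
    (hX : ∀ s ∈ I, HasDerivWithinAt X (Vη s) I s)
    (hVη : ∀ s ∈ I, HasDerivWithinAt Vη (-(Vφ s) ^ 2 / (1 - X s)) I s)
    (hVφ : ∀ s ∈ I, HasDerivWithinAt Vφ (Vη s * Vφ s / (1 - X s) - 2 * κ * Vη s) I s)
    {s t : ℝ} (hs : s ∈ I) (ht : t ∈ I) :
    Vη s ^ 2 = Vη t ^ 2 +
      ∫ y in X s..X t, 2 / (1 - y) * azimuthalVelocity κ (X t) (Vφ t) y ^ 2 := by
  set w := azimuthalVelocity κ (X t) (Vφ t)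
  have hVφ_eq : ∀ r ∈ I, Vφ r = w (X r) := fun r hr =>
    eq_azimuthalVelocity_of_angularInvariant_eq (hX1 r hr) <|
      eq_of_hasDerivWithinAt_zero hI.convex (fun q hq =>
        hasDerivWithinAt_angularInvariant (hX1 q hq) (hX q hq) (hVφ q hq)) hr ht
  have hsub : uIcc t s ⊆ I := hI.uIcc_subset ht hs
  have hforce : ContinuousOn (fun y => -w y ^ 2 / (1 - y)) {1}ᶜ :=
    ((continuousOn_azimuthalVelocity κ (X t) (Vφ t)).pow 2).neg.div (by fun_prop)
      fun y hy => sub_ne_zero.mpr (Ne.symm hy)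
  have energy : Vη s ^ 2 = Vη t ^ 2 + 2 * ∫ y in X t..X s, -w y ^ 2 / (1 - y) :=
    sq_eq_sq_add_two_mul_integral_of_hasDerivWithinAt
      (fun r hr => (hX r (hsub hr)).mono hsub)
      (fun r hr => hVφ_eq r (hsub hr) ▸ (hVη r (hsub hr)).mono hsub)
      (hforce.mono (image_subset_iff.mpr fun r hr => hX1 r (hsub hr)))
  rw [energy, intervalIntegral.integral_symm, ← intervalIntegral.integral_neg,
    ← intervalIntegral.integral_const_mul]
  congr! 3
  ring

/-- Energy identity for the radial velocity along a characteristic curve of the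
Taylor–Couette transport field: if `X(t) = η`, `V_η(t) = v_η`, `V_φ(t) = v_φ`, then
`V_η(s)² = v_η² + ∫_{X(s)}^{η} (2/(1−y)) [ (1−η)/(1−y) v_φ + (α/(2η₁))(1−y)
  − (α/(2η₁))(1−η)²/(1−y) ]² dy`. -/
theorem radial_velocity_energy_identity
    (α η₁ : ℝ) (hα : 0 < α) (hη₁ : 0 < η₁) (hη₁' : η₁ < 1)
    (I : Set ℝ) (hI : I.OrdConnected)
    (X Vη Vφ Vz : ℝ → ℝ)
    (hX1 : ∀ s ∈ I, X s < 1)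
    (hX : ∀ s ∈ I, HasDerivAt X (Vη s) s)
    (hVη : ∀ s ∈ I, HasDerivAt Vη (-(Vφ s) ^ 2 / (1 - X s)) s)
    (hVφ : ∀ s ∈ I, HasDerivAt Vφ (Vη s * Vφ s / (1 - X s) - α / η₁ * Vη s) s)
    (hVz : ∀ s ∈ I, HasDerivAt Vz 0 s)
    (t : ℝ) (ht : t ∈ I) (η vη vφ : ℝ)
    (hXt : X t = η) (hVηt : Vη t = vη) (hVφt : Vφ t = vφ) :
    ∀ s ∈ I,
      (Vη s) ^ 2 = vη ^ 2 + ∫ y in (X s)..η,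
        2 / (1 - y) * ((1 - η) / (1 - y) * vφ + α / (2 * η₁) * (1 - y)
          - α / (2 * η₁) * (1 - η) ^ 2 / (1 - y)) ^ 2 := by
  intro s hs
  subst hXt hVηt hVφt
  exact radial_velocity_energy_identity_general hI (fun r hr => (hX1 r hr).ne)
    (fun r hr => (hX r hr).hasDerivWithinAt) (fun r hr => (hVη r hr).hasDerivWithinAt)
    (fun r hr => ((hVφ r hr).congr_deriv (by ring)).hasDerivWithinAt) hs ht
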